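/- For all positive integers a and b with a ≥ b, R⁺(a+1, b) < R⁺(a, b); that is, for fixed b, R⁺(a,b) is strictly decreasing in a on the range a ≥ b. -/

import Mathlib

/-- The Beta function `B(a,b) = ∫₀¹ t^(a-1) (1-t)^(b-1) dt`. -/
noncomputable def betaFn (a b : ℝ) : ℝ := ∫ t in (0:ℝ)..1, t ^ (a - 1) * (1 - t) ^ (b - 1)

/-- `I(a,b)`: the probability that a `Beta(a,b)` random variable is `≥ 1/2`. -/
noncomputable def I (a b : ℝ) : ℝ :=
  (1 / betaFn a b) * ∫ t in (1/2 : ℝ)..1, t ^ (a - 1) * (1 - t) ^ (b - 1)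

/-- `h(x) = max (x, 1-x)`. -/
noncomputable def hFn (x : ℝ) : ℝ := max x (1 - x)

/-- Expected stage-wise reward. -/
noncomputable def R (a b : ℝ) : ℝ :=
  a / (a + b) * (hFn (I (a + 1) b) - hFn (I a b)) +
    b / (a + b) * (hFn (I a (b + 1)) - hFn (I a b))

/-- Optimistic knowledge-gradient reward. -/
noncomputable def Rplus (a b : ℝ) : ℝ :=
  max (hFn (I (a + 1) b) - hFn (I a b)) (hFn (I a (b + 1)) - hFn (I a b))

/-- Pessimistic knowledge-gradient reward. -/
noncomputable def Rminus (a b : ℝ) : ℝ :=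
  min (hFn (I (a + 1) b) - hFn (I a b)) (hFn (I a (b + 1)) - hFn (I a b))

/-!
If `a ≥ b`, then `I(a,b) ≥ 1/2`, and both `I(a,b+1)` and `1 - I(a,b+1) = I(b+1,a)` are at most
`I(a+1,b)`, since the Beta distributions have monotone likelihood ratio in both parameters. So the
first branch of `R⁺(a,b)` is the larger one and equals `I(a+1,b) - I(a,b)`. Integrating the
derivative of `t^a (1-t)^b` over `[1/2, 1]` evaluates this difference as `2^(-a-b) / (a B(a,b))`.
Since `B(a+1,b) = a / (a+b) · B(a,b)`, replacing `a` by `a+1` multiplies it by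
`(a+b) / (2(a+1)) < 1`.
-/

open Set intervalIntegral

/-- The unnormalised density of the `Beta(a,b)` distribution; its integral over `[0,1]` is
`betaFn a b`. -/
noncomputable def betaKernel (a b t : ℝ) : ℝ := t ^ (a - 1) * (1 - t) ^ (b - 1)

/-- The survival function of the `Beta(a,b)` distribution at `x ∈ [0,1]`, for `a, b > 0`; the
function `I` is the case `x = 1/2`. -/
noncomputable def betaTail (x a b : ℝ) : ℝ := (∫ t in x..1, betaKernel a b t) / betaFn a b

section Kernel

variable {a b a' b' s t : ℝ}

lemma betaKernel_pos (a b : ℝ) (ht : t ∈ Ioo 0 1) : 0 < betaKernel a b t :=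
  mul_pos (Real.rpow_pos_of_pos ht.1 _) (Real.rpow_pos_of_pos (sub_pos.2 ht.2) _)

lemma betaKernel_one_sub (a b t : ℝ) : betaKernel a b (1 - t) = betaKernel b a t := by
  rw [betaKernel, betaKernel, sub_sub_cancel, mul_comm]

lemma betaKernel_eq_mul_betaKernel (a b a' b' : ℝ) (ht : t ∈ Ioo 0 1) :
    betaKernel a' b' t = t ^ (a' - a) * (1 - t) ^ (b' - b) * betaKernel a b t := by
  rw [betaKernel, betaKernel, mul_mul_mul_comm, ← Real.rpow_add ht.1,
    ← Real.rpow_add (sub_pos.2 ht.2), sub_add_sub_cancel, sub_add_sub_cancel]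

lemma betaKernel_add_one_left (ht : t ∈ Ioo 0 1) :
    betaKernel (a + 1) b t = t * betaKernel a b t := by
  simpa using betaKernel_eq_mul_betaKernel a b (a + 1) b ht

lemma betaKernel_mul_le_mul_betaKernel (ha : a ≤ a') (hb : b' ≤ b) (hs : s ∈ Ioo 0 1)
    (ht : t ∈ Ioo 0 1) (hst : s ≤ t) :
    betaKernel a' b' s * betaKernel a b t ≤ betaKernel a' b' t * betaKernel a b s := by
  have ratio_le : s ^ (a' - a) * (1 - s) ^ (b' - b) ≤ t ^ (a' - a) * (1 - t) ^ (b' - b) :=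
    mul_le_mul (Real.rpow_le_rpow hs.1.le hst (sub_nonneg.2 ha))
      (Real.rpow_le_rpow_of_nonpos (sub_pos.2 ht.2) (by linarith) (sub_nonpos.2 hb))
      (Real.rpow_nonneg (sub_pos.2 hs.2).le _) (Real.rpow_nonneg ht.1.le _)
  have kernels_pos := mul_pos (betaKernel_pos a b hs) (betaKernel_pos a b ht)
  rw [betaKernel_eq_mul_betaKernel a b a' b' hs, betaKernel_eq_mul_betaKernel a b a' b' ht]
  linarith [mul_le_mul_of_nonneg_right ratio_le kernels_pos.le]

lemma hasDerivAt_rpow_mul_one_sub_rpow (a b : ℝ) (ht : t ∈ Ioo 0 1) :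
    HasDerivAt (fun u ↦ u ^ a * (1 - u) ^ b)
      (a * betaKernel a b t - (a + b) * betaKernel (a + 1) b t) t := by
  have h1t : 0 < 1 - t := sub_pos.2 ht.2
  have hleft : HasDerivAt (fun u ↦ u ^ a) (a * t ^ (a - 1)) t :=
    Real.hasDerivAt_rpow_const (Or.inl ht.1.ne')
  have hright : HasDerivAt (fun u ↦ (1 - u) ^ b) (-1 * b * (1 - t) ^ (b - 1)) t :=
    ((hasDerivAt_id t).const_sub 1).rpow_const (Or.inl h1t.ne')
  refine (hleft.fun_mul hright).congr_deriv ?_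
  rw [betaKernel_add_one_left ht, betaKernel, Real.rpow_sub_one ht.1.ne',
    Real.rpow_sub_one h1t.ne']
  field_simp [ht.1.ne', h1t.ne']
  ring

end Kernel

section Integral

variable {a b x y : ℝ}

lemma intervalIntegrable_betaKernel_of_lt_one (ha : 0 < a) (b : ℝ) (hx : x < 1) :
    IntervalIntegrable (betaKernel a b) MeasureTheory.volume 0 x := by
  refine (intervalIntegrable_rpow' (by linarith)).mul_continuousOn ?_
  refine (continuousOn_const.sub continuousOn_id).rpow_const fun t ht ↦ Or.inl ?_
  exact (sub_pos.2 (ht.2.trans_lt (max_lt zero_lt_one hx))).ne'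

lemma intervalIntegrable_betaKernel (ha : 0 < a) (hb : 0 < b) (hx : x ∈ Icc 0 1)
    (hy : y ∈ Icc 0 1) : IntervalIntegrable (betaKernel a b) MeasureTheory.volume x y := by
  have hleft := intervalIntegrable_betaKernel_of_lt_one ha b one_half_lt_one
  have hright :=
    ((intervalIntegrable_betaKernel_of_lt_one hb a one_half_lt_one).comp_sub_left 1).symm
  simp only [betaKernel_one_sub, sub_half, sub_zero] at hright
  refine (hleft.trans hright).mono_set ?_
  rw [uIcc_of_le zero_le_one]
  exact uIcc_subset_Icc hx hy

lemma betaFn_pos (ha : 0 < a) (hb : 0 < b) : 0 < betaFn a b :=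
  intervalIntegral_pos_of_pos_on
    (intervalIntegrable_betaKernel ha hb (left_mem_Icc.2 zero_le_one)
      (right_mem_Icc.2 zero_le_one))
    (fun _ ↦ betaKernel_pos a b) zero_lt_one

lemma integral_betaKernel_swap (x y a b : ℝ) :
    ∫ t in x..y, betaKernel b a t = ∫ t in (1 - y)..(1 - x), betaKernel a b t := by
  simp only [← integral_comp_sub_left (betaKernel a b) 1, betaKernel_one_sub]

lemma betaFn_swap (a b : ℝ) : betaFn b a = betaFn a b := by
  simpa only [betaFn, betaKernel, sub_self, sub_zero] using integral_betaKernel_swap 0 1 a b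

lemma integral_betaKernel_nonneg (a b : ℝ) (hx : 0 ≤ x) (hxy : x ≤ y) (hy : y ≤ 1) :
    0 ≤ ∫ t in x..y, betaKernel a b t :=
  integral_nonneg hxy fun _ ht ↦ mul_nonneg (Real.rpow_nonneg (hx.trans ht.1) _)
    (Real.rpow_nonneg (sub_nonneg.2 (ht.2.trans hy)) _)

lemma integral_betaKernel_add_integral_betaKernel (ha : 0 < a) (hb : 0 < b)
    (hx : x ∈ Icc 0 1) :
    (∫ t in 0..x, betaKernel a b t) + ∫ t in x..1, betaKernel a b t = betaFn a b :=
  integral_add_adjacent_intervals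
    (intervalIntegrable_betaKernel ha hb (left_mem_Icc.2 zero_le_one) hx)
    (intervalIntegrable_betaKernel ha hb hx (right_mem_Icc.2 zero_le_one))

lemma add_mul_integral_betaKernel_add_one_left (ha : 0 < a) (hb : 0 < b) (hx : 0 ≤ x)
    (hxy : x ≤ y) (hy : y ≤ 1) :
    (a + b) * ∫ t in x..y, betaKernel (a + 1) b t =
      a * (∫ t in x..y, betaKernel a b t) + x ^ a * (1 - x) ^ b - y ^ a * (1 - y) ^ b := by
  have hx' : x ∈ Icc 0 1 := ⟨hx, hxy.trans hy⟩
  have hy' : y ∈ Icc 0 1 := ⟨hx.trans hxy, hy⟩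
  have hint := (intervalIntegrable_betaKernel ha hb hx' hy').const_mul a
  have hint_succ :=
    (intervalIntegrable_betaKernel (add_pos ha one_pos) hb hx' hy').const_mul (a + b)
  have hcont : ContinuousOn (fun t : ℝ ↦ t ^ a * (1 - t) ^ b) (Icc x y) :=
    (continuousOn_id.rpow_const fun _ _ ↦ Or.inr ha.le).mul
      ((continuousOn_const.sub continuousOn_id).rpow_const fun _ _ ↦ Or.inr hb.le)
  have hftc := integral_eq_sub_of_hasDerivAt_of_le hxy hcont
    (fun t ht ↦ hasDerivAt_rpow_mul_one_sub_rpow a b ⟨hx.trans_lt ht.1, ht.2.trans_le hy⟩)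
    (hint.sub hint_succ)
  rw [integral_sub hint hint_succ, integral_const_mul, integral_const_mul] at hftc
  linarith

lemma betaFn_add_one_left (ha : 0 < a) (hb : 0 < b) :
    betaFn (a + 1) b = a / (a + b) * betaFn a b := by
  have h := add_mul_integral_betaKernel_add_one_left ha hb le_rfl zero_le_one le_rfl
  rw [Real.zero_rpow ha.ne', sub_self, Real.zero_rpow hb.ne', zero_mul, mul_zero, add_zero,
    sub_zero] at h
  rw [div_mul_eq_mul_div, eq_div_iff (add_pos ha hb).ne', mul_comm]
  exact h

end Integral

section Tail

variable {a b a' b' x : ℝ}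

lemma betaTail_one_sub (ha : 0 < a) (hb : 0 < b) (hx : x ∈ Icc 0 1) :
    betaTail (1 - x) b a = 1 - betaTail x a b := by
  have hlower : ∫ t in (1 - x)..1, betaKernel b a t = ∫ t in 0..x, betaKernel a b t := by
    rw [integral_betaKernel_swap, sub_self, sub_sub_cancel]
  rw [betaTail, betaTail, hlower, betaFn_swap, eq_sub_iff_add_eq, ← add_div,
    integral_betaKernel_add_integral_betaKernel ha hb hx, div_self (betaFn_pos ha hb).ne']

lemma betaTail_add_one_left (ha : 0 < a) (hb : 0 < b) (hx : x ∈ Icc 0 1) :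
    betaTail x (a + 1) b = betaTail x a b + x ^ a * (1 - x) ^ b / (a * betaFn a b) := by
  have hB := (betaFn_pos ha hb).ne'
  have hab := (add_pos ha hb).ne'
  have h := add_mul_integral_betaKernel_add_one_left ha hb hx.1 hx.2 le_rfl
  rw [sub_self, Real.zero_rpow hb.ne', mul_zero, sub_zero, mul_comm, ← eq_div_iff hab] at h
  rw [betaTail, betaTail, betaFn_add_one_left ha hb, h]
  field_simp

lemma integral_betaKernel_mul_le_mul_integral_betaKernel (ha : 0 < a) (hb' : 0 < b')
    (haa' : a ≤ a') (hbb' : b' ≤ b) (hx : x ∈ Ioo 0 1) :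
    (∫ t in x..1, betaKernel a b t) * (∫ t in 0..x, betaKernel a' b' t) ≤
      (∫ t in x..1, betaKernel a' b' t) * ∫ t in 0..x, betaKernel a b t := by
  have ha' := ha.trans_le haa'
  have hb := hb'.trans_le hbb'
  have hx' := Ioo_subset_Icc_self hx
  have h0 : (0 : ℝ) ∈ Icc 0 1 := left_mem_Icc.2 zero_le_one
  have h1 : (1 : ℝ) ∈ Icc 0 1 := right_mem_Icc.2 zero_le_one
  -- The likelihood ratio is at least its value at `x` above `x`, and at most that below `x`.
  have upper_le : betaKernel a' b' x * ∫ t in x..1, betaKernel a b t ≤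
      (∫ t in x..1, betaKernel a' b' t) * betaKernel a b x := by
    rw [← integral_const_mul, ← integral_mul_const]
    exact integral_mono_on_of_le_Ioo hx.2.le
      ((intervalIntegrable_betaKernel ha hb hx' h1).const_mul _)
      ((intervalIntegrable_betaKernel ha' hb' hx' h1).mul_const _) fun t ht ↦
        betaKernel_mul_le_mul_betaKernel haa' hbb' hx ⟨hx.1.trans ht.1, ht.2⟩ ht.1.le
  have lower_le : (∫ t in 0..x, betaKernel a' b' t) * betaKernel a b x ≤
      betaKernel a' b' x * ∫ t in 0..x, betaKernel a b t := by
    rw [← integral_const_mul, ← integral_mul_const]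
    exact integral_mono_on_of_le_Ioo hx.1.le
      ((intervalIntegrable_betaKernel ha' hb' h0 hx').mul_const _)
      ((intervalIntegrable_betaKernel ha hb h0 hx').const_mul _) fun t ht ↦
        betaKernel_mul_le_mul_betaKernel haa' hbb' ⟨ht.1, ht.2.trans hx.2⟩ hx ht.2.le
  have upper_nonneg := integral_betaKernel_nonneg a b hx.1.le hx.2.le le_rfl
  have lower_nonneg := integral_betaKernel_nonneg a b le_rfl hx.1.le hx.2.le
  refine le_of_mul_le_mul_right ?_ (betaKernel_pos a b hx)
  linarith [mul_le_mul_of_nonneg_left lower_le upper_nonneg,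
    mul_le_mul_of_nonneg_right upper_le lower_nonneg]

lemma betaTail_le_betaTail (ha : 0 < a) (hb' : 0 < b') (haa' : a ≤ a') (hbb' : b' ≤ b)
    (hx : x ∈ Ioo 0 1) : betaTail x a b ≤ betaTail x a' b' := by
  have ha' := ha.trans_le haa'
  have hb := hb'.trans_le hbb'
  have hx' := Ioo_subset_Icc_self hx
  rw [betaTail, betaTail, div_le_div_iff₀ (betaFn_pos ha hb) (betaFn_pos ha' hb'),
    ← integral_betaKernel_add_integral_betaKernel ha hb hx',
    ← integral_betaKernel_add_integral_betaKernel ha' hb' hx']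
  linarith [integral_betaKernel_mul_le_mul_integral_betaKernel ha hb' haa' hbb' hx]

end Tail

section Reward

variable {a b a' b' : ℝ}

lemma I_eq_betaTail (a b : ℝ) : I a b = betaTail (1 / 2) a b :=
  one_div_mul_eq_div _ _

lemma I_swap (ha : 0 < a) (hb : 0 < b) : I b a = 1 - I a b := by
  have h := betaTail_one_sub ha hb (x := 1 / 2) (by norm_num)
  rwa [sub_half, ← I_eq_betaTail, ← I_eq_betaTail] at h

lemma I_le_I (ha : 0 < a) (hb' : 0 < b') (haa' : a ≤ a') (hbb' : b' ≤ b) : I a b ≤ I a' b' := by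
  rw [I_eq_betaTail, I_eq_betaTail]
  exact betaTail_le_betaTail ha hb' haa' hbb' (by norm_num)

lemma I_add_one_left (ha : 0 < a) (hb : 0 < b) :
    I (a + 1) b = I a b + (1 / 2) ^ (a + b) / (a * betaFn a b) := by
  rw [I_eq_betaTail, I_eq_betaTail, betaTail_add_one_left ha hb (by norm_num), sub_half,
    Real.rpow_add one_half_pos]

lemma half_le_I (hb : 0 < b) (hab : b ≤ a) : 1 / 2 ≤ I a b := by
  have hswap := I_swap (hb.trans_le hab) hb
  have hle := I_le_I hb hb hab hab
  linarith

lemma hFn_I (hb : 0 < b) (hab : b ≤ a) : hFn (I a b) = I a b :=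
  max_eq_left (by linarith [half_le_I hb hab])

lemma hFn_I_add_one_right_le (hb : 0 < b) (hab : b ≤ a) :
    hFn (I a (b + 1)) ≤ I (a + 1) b := by
  have ha := hb.trans_le hab
  refine max_le (I_le_I ha hb (by linarith) (by linarith)) ?_
  rw [← I_swap ha (by linarith)]
  exact I_le_I (by linarith) hb (by linarith) hab

lemma Rplus_eq (hb : 0 < b) (hab : b ≤ a) :
    Rplus a b = (1 / 2) ^ (a + b) / (a * betaFn a b) := by
  rw [Rplus, hFn_I hb hab, hFn_I hb (by linarith : b ≤ a + 1),
    max_eq_left (sub_le_sub_right (hFn_I_add_one_right_le hb hab) _),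
    I_add_one_left (hb.trans_le hab) hb, add_sub_cancel_left]

lemma Rplus_add_one_left (hb : 0 < b) (hab : b ≤ a) :
    Rplus (a + 1) b = (a + b) / (2 * (a + 1)) * Rplus a b := by
  have ha := hb.trans_le hab
  have hB := (betaFn_pos ha hb).ne'
  rw [Rplus_eq hb hab, Rplus_eq hb (by linarith : b ≤ a + 1), betaFn_add_one_left ha hb,
    add_right_comm, Real.rpow_add_one one_half_pos.ne']
  field_simp

lemma Rplus_pos (hb : 0 < b) (hab : b ≤ a) : 0 < Rplus a b := by
  have ha := hb.trans_le hab
  have hB := betaFn_pos ha hb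
  rw [Rplus_eq hb hab]
  positivity

end Reward

theorem Rplus_strict_anti_left_general {a b : ℝ} (hb : 0 < b) (hab : b ≤ a) :
    Rplus (a + 1) b < Rplus a b := by
  have ratio_lt_one : (a + b) / (2 * (a + 1)) < 1 :=
    (div_lt_one (by linarith)).2 (by linarith)
  rw [Rplus_add_one_left hb hab]
  exact mul_lt_of_lt_one_left (Rplus_pos hb hab) ratio_lt_one

theorem Rplus_strict_anti_left (a b : ℕ) (ha : 0 < a) (hb : 0 < b) (hab : b ≤ a) :
    Rplus ((a : ℝ) + 1) b < Rplus a b :=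
  Rplus_strict_anti_left_general (Nat.cast_pos.2 hb) (Nat.cast_le.2 hab)
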